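/- Let X be a compact metric space with Lebesgue covering dimension dim(X) = d < ∞ and let T : X → X be a homeomorphism such that dim(P_n) < n/2 for all n ≤ 2d, where P_n is the set of periodic points of period at most n. Then the dynamical system (X,T) embeds equivariantly into the cubical shift ([0,1]^ℤ, σ), i.e. there is a topological embedding φ : X → [0,1]^ℤ with φ ∘ T = σ ∘ φ, where σ is the shift map σ((x_i)_{i∈ℤ}) = (x_{i+1})_{i∈ℤ}. -/

import Mathlib

open Function Set Topology unitInterval

/-- A topological space `X` has Lebesgue covering dimension at most `m`:
every finite open cover admits a finite open refinement in which no point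
belongs to more than `m + 1` sets. -/
def CovDimLE (X : Type*) [TopologicalSpace X] (m : ℕ) : Prop :=
  ∀ (n : ℕ) (U : Fin n → Set X), (∀ i, IsOpen (U i)) → (⋃ i, U i) = univ →
    ∃ (k : ℕ) (V : Fin k → Set X), (∀ j, IsOpen (V j)) ∧ (⋃ j, V j) = univ ∧
      (∀ j, ∃ i, V j ⊆ U i) ∧ ∀ x : X, Nat.card {j : Fin k // x ∈ V j} ≤ m + 1

/-- The Lebesgue covering dimension of a topological space, as an element of `ℕ∞`
(`⊤` if no finite bound exists). -/
noncomputable def covDim (X : Type*) [TopologicalSpace X] : ℕ∞ :=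
  sInf {e : ℕ∞ | ∃ m : ℕ, e = m ∧ CovDimLE X m}

/-- The set of periodic points of `T` of period at most `n`. -/
def periodicLE {X : Type*} (T : X → X) (n : ℕ) : Set X :=
  {x | ∃ p, 1 ≤ p ∧ p ≤ n ∧ T^[p] x = x}

/-- The `(2d+1)`-delay observation map associated to an observable `h : C(X, [0,1])`
and the dynamics `T : X → X`: `x ↦ (h x, h (T x), …, h (T^{2d} x))`. -/
def delayMap {X : Type*} [TopologicalSpace X] (T : X → X) (d : ℕ)
    (h : C(X, I)) : X → (Fin (2 * d + 1) → I) :=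
  fun x i => h (T^[(i : ℕ)] x)

/-!
An observable `h : C(X, ℝ)` yields the equivariant map `x ↦ (h (T ^ i x))ᵢ`, which is an embedding
as soon as `h` separates any two points along their orbits. By Baire's theorem this need only be
achieved, with a dense set of observables, near a single pair of distinct points `x, y` of the same
minimal period `p`. On a neighbourhood of `{x, y}` in the points of period `p`, of dimension `D`,
more than `2 * D` iterates of `T` have pairwise disjoint images, so that the values of `h` along
these iterates form an arbitrary map `F` to a space of dimension `N > 2 * D`. Generically `F`
separates points, as in the Menger–Nöbeling theorem. If `y` is in the finite orbit of `x`, then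
observing it amounts to permuting the coordinates of `F` by some fixed-point free `τ`, and one needs
`F a ≠ F b ∘ τ` instead, including for `a = b`. This is generic because the vectors fixed by `τ`
have dimension at most `N / 2 < N - D`. Pairs with the same minimal period suffice: if `h` does not
separate `x` from `y` and `T ^ p x = x`, then it does not separate `y` from `T ^ p y` either.
-/

open Module

section LinearSystems

variable {J P Q V : Type*} [Fintype J]
  [NormedAddCommGroup P] [NormedSpace ℝ P] [FiniteDimensional ℝ P]
  [NormedAddCommGroup Q] [NormedSpace ℝ Q] [FiniteDimensional ℝ Q]
  [NormedAddCommGroup V] [NormedSpace ℝ V] [FiniteDimensional ℝ V]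

theorem dimH_iUnion_lt_of_finite {ι Y : Type*} [Finite ι] [EMetricSpace Y] {s : ι → Set Y}
    {r : ENNReal} (hr : 0 < r) (h : ∀ i, dimH (s i) < r) : dimH (⋃ i, s i) < r := by
  rw [dimH_iUnion]
  cases nonempty_fintype ι
  rw [← Finset.sup_univ_eq_iSup, Finset.sup_lt_iff hr]
  exact fun i _ => h i

omit [FiniteDimensional ℝ V] in
theorem dimH_image_le_finrank {f : P → V} {s : Set P}
    (hf : ∀ x ∈ s, ContDiffAt ℝ 1 f x) : dimH (f '' s) ≤ finrank ℝ P := by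
  have hlip (x : P) (hx : x ∈ s) : ∃ C : NNReal, ∃ t ∈ 𝓝[s] x, LipschitzOnWith C f t := by
    obtain ⟨C, t, ht, hC⟩ := (hf x hx).exists_lipschitzOnWith
    exact ⟨C, t, mem_nhdsWithin_of_mem_nhds ht, hC⟩
  calc dimH (f '' s) ≤ dimH s := dimH_image_le_of_locally_lipschitzOn hlip
    _ ≤ dimH (univ : Set P) := dimH_mono (subset_univ s)
    _ = finrank ℝ P := Real.dimH_univ_eq_finrank P

theorem finrank_ker_proj_add_finrank {J : Type*} [Finite J] (j : J) :
    finrank ℝ (LinearMap.proj j : (J → V) →ₗ[ℝ] V).ker + finrank ℝ V = finrank ℝ (J → V) := by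
  classical
  have := (LinearMap.proj j : (J → V) →ₗ[ℝ] V).finrank_range_add_finrank_ker
  rwa [LinearMap.range_eq_top.2 (LinearMap.proj_surjective j), finrank_top, add_comm] at this

/-- The unknown `v j₀` with invertible coefficient is determined by the parameter and the other
unknowns, so the solutions are the image of a space of dimension less than `finrank (J → V)`. -/
theorem dimH_setOf_exists_sum_eq_lt (j₀ : J) {c : J → Q → V →L[ℝ] V} {z : Q → V}
    (hc : ∀ j, ContDiff ℝ 1 (c j)) (hz : ContDiff ℝ 1 z) (hQ : finrank ℝ Q < finrank ℝ V) :
    dimH {v : J → V | ∃ q, IsUnit (c j₀ q) ∧ ∑ j, c j q (v j) = z q} < finrank ℝ (J → V) := by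
  classical
  let W := (LinearMap.proj j₀ : (J → V) →ₗ[ℝ] V).ker
  let f : Q × W → (J → V) := fun p =>
    p.2 + ContinuousLinearMap.single ℝ (fun _ => V) j₀
      (Ring.inverse (c j₀ p.1) (z p.1 - ∑ j, c j p.1 (p.2.1 j)))
  have hf : ∀ p ∈ {p : Q × W | IsUnit (c j₀ p.1)}, ContDiffAt ℝ 1 f p := by
    rintro p ⟨u, hu⟩
    have hinv : ContDiffAt ℝ 1 Ring.inverse (c j₀ p.1) := hu ▸ contDiffAt_ringInverse ℝ u
    have hW : ContDiff ℝ 1 fun p : Q × W => (p.2 : J → V) :=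
      W.subtypeL.contDiff.comp contDiff_snd
    have hrhs : ContDiff ℝ 1 fun p : Q × W => z p.1 - ∑ j, c j p.1 (p.2.1 j) :=
      (hz.comp contDiff_fst).sub (ContDiff.sum fun j _ =>
        ((hc j).comp contDiff_fst).clm_apply ((contDiff_apply ℝ V j).comp hW))
    exact hW.contDiffAt.add
      ((ContinuousLinearMap.contDiff _).contDiffAt.comp p (ContDiffAt.clm_apply
        (ContDiffAt.comp (f := fun p : Q × W => c j₀ p.1) p hinv
          ((hc j₀).comp contDiff_fst).contDiffAt) hrhs.contDiffAt))
  have hsub : {v : J → V | ∃ q, IsUnit (c j₀ q) ∧ ∑ j, c j q (v j) = z q} ⊆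
      f '' {p | IsUnit (c j₀ p.1)} := by
    rintro v ⟨q, hq, hv⟩
    let w : W := ⟨v - Pi.single j₀ (v j₀), by simp [W]⟩
    refine ⟨(q, w), hq, ?_⟩
    have hsum : z q - ∑ j, c j q (w.1 j) = c j₀ q (v j₀) := by
      have : ∑ j, c j q ((Pi.single j₀ (v j₀) : J → V) j) = c j₀ q (v j₀) := by
        rw [Fintype.sum_eq_single j₀ fun j hj => by simp [hj], Pi.single_eq_same]
      simp only [w, Pi.sub_apply, map_sub, Finset.sum_sub_distrib, hv, this, sub_sub_cancel]
    have hcancel : Ring.inverse (c j₀ q) (c j₀ q (v j₀)) = v j₀ :=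
      DFunLike.congr_fun (Ring.inverse_mul_cancel _ hq) (v j₀)
    simp only [f, hsum, hcancel]
    exact sub_add_cancel v _
  calc dimH {v : J → V | ∃ q, IsUnit (c j₀ q) ∧ ∑ j, c j q (v j) = z q}
      ≤ dimH (f '' {p | IsUnit (c j₀ p.1)}) := dimH_mono hsub
    _ ≤ finrank ℝ (Q × W) := dimH_image_le_finrank hf
    _ < finrank ℝ (J → V) := by
        rw [Nat.cast_lt, finrank_prod, ← finrank_ker_proj_add_finrank j₀, add_comm]
        exact Nat.add_lt_add_left hQ _

omit [FiniteDimensional ℝ Q] in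
theorem dimH_setOf_exists_mem_affineSubspace_sum_eq_lt {A : AffineSubspace ℝ Q} (j₀ : J)
    [FiniteDimensional ℝ A.direction]
    {c : J → Q → V →L[ℝ] V} {z : Q → V} (hc : ∀ j, ContDiff ℝ 1 (c j)) (hz : ContDiff ℝ 1 z)
    (hA : finrank ℝ A.direction < finrank ℝ V) :
    dimH {v : J → V | ∃ q ∈ A, IsUnit (c j₀ q) ∧ ∑ j, c j q (v j) = z q} <
      finrank ℝ (J → V) := by
  rcases (A : Set Q).eq_empty_or_nonempty with hempty | ⟨q₀, hq₀⟩
  · have : Nonempty J := ⟨j₀⟩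
    have : Nontrivial V := nontrivial_of_finrank_pos (R := ℝ) (by omega)
    have hno (q : Q) : q ∉ A := eq_empty_iff_forall_notMem.1 hempty q
    simpa [hno] using finrank_pos (R := ℝ) (M := J → V)
  · have htranslate : ContDiff ℝ 1 fun w : A.direction => (w : Q) + q₀ :=
      A.direction.subtypeL.contDiff.add contDiff_const
    refine (dimH_mono ?_).trans_lt (dimH_setOf_exists_sum_eq_lt j₀
      (fun j => (hc j).comp htranslate) (hz.comp htranslate) hA)
    rintro v ⟨q, hq, hv⟩
    exact ⟨⟨q - q₀, AffineSubspace.vsub_mem_direction hq hq₀⟩, by simpa using hv⟩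

omit [FiniteDimensional ℝ V] in
theorem isUnit_smul_one_sub_smul [CompleteSpace V] {L : V →L[ℝ] V} (hL : ‖L‖ ≤ 1) {a b : ℝ}
    (hab : |b| < |a|) : IsUnit (a • (1 : V →L[ℝ] V) - b • L) := by
  have hnorm : ‖b • L‖ * ‖(1 : V →L[ℝ] V)‖ < ‖a‖ :=
    calc ‖b • L‖ * ‖(1 : V →L[ℝ] V)‖ ≤ |b| * 1 * 1 := by
          rw [norm_smul, Real.norm_eq_abs]
          gcongr
          exact ContinuousLinearMap.norm_id_le
      _ < ‖a‖ := by simpa using hab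
  exact Algebra.algebraMap_eq_smul_one (A := V →L[ℝ] V) a ▸
    spectrum.mem_resolventSet_of_norm_lt_mul hnorm

theorem finrank_direction_prod_le (A : AffineSubspace ℝ P) (B : AffineSubspace ℝ Q) :
    finrank ℝ (A.prod B).direction ≤ finrank ℝ A.direction + finrank ℝ B.direction :=
  calc finrank ℝ (A.prod B).direction
      ≤ finrank ℝ (A.direction.subtype.prodMap B.direction.subtype).range := by
        rw [LinearMap.range_prodMap, Submodule.range_subtype, Submodule.range_subtype]
        exact Submodule.finrank_mono (AffineSubspace.direction_prod_le A B)
    _ ≤ finrank ℝ (A.direction × B.direction) := LinearMap.finrank_range_le _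
    _ = finrank ℝ A.direction + finrank ℝ B.direction := finrank_prod

end LinearSystems

/-- The `D`-skeleton of the standard simplex with vertex set `J`: the points with at most `D + 1`
nonzero barycentric coordinates. -/
def simplexSkeleton (J : Type*) [Fintype J] (D : ℕ) : Set (J → ℝ) :=
  {a ∈ stdSimplex ℝ J | (support a).ncard ≤ D + 1}

section SimplexSkeleton

variable {J V : Type*} [Fintype J] {D : ℕ}

theorem exists_lt_of_mem_stdSimplex_of_ne {a b : J → ℝ} (ha : a ∈ stdSimplex ℝ J)
    (hb : b ∈ stdSimplex ℝ J) (hab : a ≠ b) : ∃ j, b j < a j := by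
  by_contra! hle
  have := (Finset.sum_eq_sum_iff_of_le fun j _ => hle j).1 (ha.2.trans hb.2.symm)
  exact hab (funext fun j => this j (Finset.mem_univ j))

theorem exists_pos_of_mem_stdSimplex {a : J → ℝ} (ha : a ∈ stdSimplex ℝ J) : ∃ j, 0 < a j := by
  by_contra! hle
  have := Finset.sum_nonpos fun j (_ : j ∈ Finset.univ) => hle j
  linarith [ha.2]

theorem exists_affineSubspaces_cover_simplexSkeleton (J : Type*) [Fintype J] (D : ℕ) :
    ∃ 𝓐 : Set (AffineSubspace ℝ (J → ℝ)), 𝓐.Finite ∧ (∀ A ∈ 𝓐, finrank ℝ A.direction ≤ D) ∧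
      ∀ a ∈ simplexSkeleton J D, ∃ A ∈ 𝓐, a ∈ A := by
  classical
  let vertex (j : J) : J → ℝ := Pi.single j 1
  let face (s : Finset J) : AffineSubspace ℝ (J → ℝ) := affineSpan ℝ (s.image vertex)
  refine ⟨face '' {s | s.Nonempty ∧ s.card ≤ D + 1}, (toFinite _).image face, ?_, ?_⟩
  · rintro _ ⟨s, ⟨hs, hsD⟩, rfl⟩
    rw [direction_affineSpan]
    have hcard : s.card = s.card - 1 + 1 := (Nat.sub_add_cancel hs.card_pos).symm
    exact (finrank_vectorSpan_image_finset_le ℝ vertex s hcard).trans (by omega)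
  · rintro a ⟨ha, haD⟩
    obtain ⟨j, hj⟩ := exists_pos_of_mem_stdSimplex ha
    let s := Finset.univ.filter fun i => a i ≠ 0
    have hsum : ∑ i ∈ s, a i = 1 := by rw [Finset.sum_filter_ne_zero, ha.2]
    have hcomb : ∑ i ∈ s, a i • vertex i = a := by
      rw [Finset.sum_filter_of_ne fun i _ => left_ne_zero_of_smul]
      exact (pi_eq_sum_univ' a).symm
    refine ⟨face s, ⟨s, ⟨⟨j, by simpa [s] using hj.ne'⟩, ?_⟩, rfl⟩, ?_⟩
    · rwa [← Set.ncard_coe_finset, Finset.coe_filter_univ]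
    · rw [← hcomb]
      exact convexHull_subset_affineSpan _ ((convex_convexHull ℝ _).sum_mem (fun i _ => ha.1 i)
        hsum fun i hi => subset_convexHull ℝ _ (Finset.mem_coe.2 (Finset.mem_image_of_mem _ hi)))

variable [NormedAddCommGroup V] [NormedSpace ℝ V] [FiniteDimensional ℝ V]

theorem dimH_setOf_exists_ne_mem_simplexSkeleton_lt [Nonempty J] (hD : 2 * D < finrank ℝ V)
    {L : V →L[ℝ] V} (hL : ‖L‖ ≤ 1) :
    dimH {v : J → V | ∃ a ∈ simplexSkeleton J D, ∃ b ∈ simplexSkeleton J D, a ≠ b ∧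
      ∑ j, a j • v j = L (∑ j, b j • v j)} < finrank ℝ (J → V) := by
  obtain ⟨𝓐, hfin, hdim, hcov⟩ := exists_affineSubspaces_cover_simplexSkeleton J D
  have := hfin.to_subtype
  let c (j : J) (q : (J → ℝ) × (J → ℝ)) : V →L[ℝ] V := q.1 j • 1 - q.2 j • L
  have hc (j : J) : ContDiff ℝ 1 (c j) := by fun_prop
  have hpos : (0 : ENNReal) < finrank ℝ (J → V) := by
    have : Nontrivial V := nontrivial_of_finrank_pos (R := ℝ) (by omega)
    exact_mod_cast finrank_pos (R := ℝ) (M := J → V)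
  refine (dimH_mono ?_).trans_lt (dimH_iUnion_lt_of_finite (ι := 𝓐 × 𝓐 × J) hpos fun x =>
    dimH_setOf_exists_mem_affineSubspace_sum_eq_lt (A := x.1.1.prod x.2.1.1) x.2.2 hc
      (contDiff_const (c := 0)) ?_)
  · rintro v ⟨a, ha, b, hb, hab, hv⟩
    obtain ⟨j, hj⟩ := exists_lt_of_mem_stdSimplex_of_ne ha.1 hb.1 hab
    obtain ⟨A, hA, haA⟩ := hcov a ha
    obtain ⟨B, hB, hbB⟩ := hcov b hb
    have hunit : IsUnit (c j (a, b)) := isUnit_smul_one_sub_smul hL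
      (by rwa [abs_of_nonneg (ha.1.1 j), abs_of_nonneg (hb.1.1 j)])
    refine mem_iUnion.2 ⟨(⟨A, hA⟩, ⟨B, hB⟩, j), (a, b), ⟨haA, hbB⟩, hunit, ?_⟩
    simp only [c, sub_apply, smul_apply, one_apply_eq_self, Finset.sum_sub_distrib, hv, map_sum,
      map_smul, sub_self]
  · have h1 := hdim _ x.1.2
    have h2 := hdim _ x.2.1.2
    have := finrank_direction_prod_le x.1.1 x.2.1.1
    omega

theorem dimH_setOf_exists_sum_smul_mem_submodule_lt [Nonempty J] {W : Submodule ℝ V}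
    (hD : D + finrank ℝ W < finrank ℝ V) :
    dimH {v : J → V | ∃ a ∈ simplexSkeleton J D, ∑ j, a j • v j ∈ W} < finrank ℝ (J → V) := by
  obtain ⟨𝓐, hfin, hdim, hcov⟩ := exists_affineSubspaces_cover_simplexSkeleton J D
  have := hfin.to_subtype
  let c (j : J) (q : (J → ℝ) × V) : V →L[ℝ] V := q.1 j • 1
  have hc (j : J) : ContDiff ℝ 1 (c j) := by fun_prop
  have hpos : (0 : ENNReal) < finrank ℝ (J → V) := by
    have : Nontrivial V := nontrivial_of_finrank_pos (R := ℝ) (by omega)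
    exact_mod_cast finrank_pos (R := ℝ) (M := J → V)
  refine (dimH_mono ?_).trans_lt (dimH_iUnion_lt_of_finite (ι := 𝓐 × J) hpos fun x =>
    dimH_setOf_exists_mem_affineSubspace_sum_eq_lt (A := x.1.1.prod W.toAffineSubspace) x.2 hc
      contDiff_snd ?_)
  · rintro v ⟨a, ha, hv⟩
    obtain ⟨j, hj⟩ := exists_pos_of_mem_stdSimplex ha.1
    obtain ⟨A, hA, haA⟩ := hcov a ha
    have hunit : IsUnit (c j (a, ∑ i, a i • v i)) := isUnit_one.smul (Units.mk0 _ hj.ne')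
    exact mem_iUnion.2 ⟨(⟨A, hA⟩, j), (a, _), ⟨haA, hv⟩, hunit, rfl⟩
  · have h1 := hdim _ x.1.2
    have := finrank_direction_prod_le x.1.1 W.toAffineSubspace
    rw [Submodule.toAffineSubspace_direction] at this
    omega

end SimplexSkeleton

section CoveringDimension

theorem CovDimLE.of_isClosedEmbedding {X Y : Type*} [TopologicalSpace X] [TopologicalSpace Y]
    {f : Y → X} (hf : IsClosedEmbedding f) {m : ℕ} (h : CovDimLE X m) : CovDimLE Y m := by
  intro n U hU hcov
  rcases isEmpty_or_nonempty Y with hY | ⟨⟨y₀⟩⟩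
  · exact ⟨0, Fin.elim0, fun j => j.elim0, Subsingleton.elim _ _, fun j => j.elim0,
      fun x => isEmptyElim x⟩
  choose O hO hOU using fun i => hf.isInducing.isOpen_iff.1 (hU i)
  have hcov' : ⋃ i, (Fin.cons (range f)ᶜ O : Fin (n + 1) → Set X) i = univ := by
    refine eq_univ_of_forall fun x => mem_iUnion.2 ?_
    by_cases hx : x ∈ range f
    · obtain ⟨y, rfl⟩ := hx
      obtain ⟨i, hi⟩ := mem_iUnion.1 (hcov ▸ mem_univ y)
      exact ⟨i.succ, by simpa only [Fin.cons_succ, ← mem_preimage, hOU] using hi⟩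
    · exact ⟨0, hx⟩
  obtain ⟨k, V, hV, hVcov, hVO, hcard⟩ :=
    h (n + 1) _ (Fin.cases hf.isClosed_range.isOpen_compl hO) hcov'
  obtain ⟨i₀, -⟩ := mem_iUnion.1 (hcov ▸ mem_univ y₀)
  refine ⟨k, fun j => f ⁻¹' V j, fun j => (hV j).preimage hf.continuous, ?_, fun j => ?_,
    fun x => hcard (f x)⟩
  · rw [← preimage_iUnion, hVcov, preimage_univ]
  · obtain ⟨i, hi⟩ := hVO j
    cases i using Fin.cases with
    | zero => exact ⟨i₀, fun y hy => absurd (mem_range_self y) (hi hy)⟩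
    | succ i => exact ⟨i, fun y hy => hOU i ▸ hi hy⟩

variable {M V : Type*} [TopologicalSpace M] [CompactSpace M] {D : ℕ}

theorem CovDimLE.exists_refinement (hM : CovDimLE M D) {ι : Type*} {U : ι → Set M}
    (hU : ∀ i, IsOpen (U i)) (hcov : ⋃ i, U i = univ) :
    ∃ (k : ℕ) (W : Fin k → Set M), (∀ j, IsOpen (W j)) ∧ ⋃ j, W j = univ ∧
      (∀ j, ∃ i, W j ⊆ U i) ∧ ∀ m, Nat.card {j : Fin k // m ∈ W j} ≤ D + 1 := by
  obtain ⟨s, hs⟩ := isCompact_univ.elim_finite_subcover U hU hcov.ge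
  have hcov' : ⋃ n : Fin s.card, U (s.equivFin.symm n) = univ := by
    rw [s.equivFin.symm.surjective.iUnion_comp (fun i : s => U i), iUnion_subtype]
    exact univ_subset_iff.1 hs
  obtain ⟨k, W, hW, hWcov, hWU, hcard⟩ := hM _ _ (fun n => hU _) hcov'
  exact ⟨k, W, hW, hWcov, fun j => (hWU j).imp' _ fun _ => id, hcard⟩

variable [T2Space M]

theorem CovDimLE.exists_partitionOfUnity (hM : CovDimLE M D) {ι : Type*} {U : ι → Set M}
    (hU : ∀ i, IsOpen (U i)) (hcov : ⋃ i, U i = univ) :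
    ∃ (k : ℕ) (ρ : PartitionOfUnity (Fin k) M univ),
      (∀ m, (fun j => ρ j m) ∈ simplexSkeleton (Fin k) D) ∧ ∀ j, ∃ i, support (ρ j) ⊆ U i := by
  obtain ⟨k, W, hW, hWcov, hWU, hcard⟩ := hM.exists_refinement hU hcov
  obtain ⟨ρ, hρ⟩ := PartitionOfUnity.exists_isSubordinate isClosed_univ W hW hWcov.ge
  have hsupp (j : Fin k) : support (ρ j) ⊆ W j := (subset_tsupport _).trans (hρ j)
  refine ⟨k, ρ, fun m => ⟨⟨fun j => ρ.nonneg j m, ?_⟩, ?_⟩, fun j =>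
    (hWU j).imp fun i => (hsupp j).trans⟩
  · rw [← finsum_eq_sum_of_fintype, ρ.sum_eq_one (mem_univ m)]
  · exact (ncard_le_ncard fun j hj => hsupp j hj).trans (hcard m)

variable [NormedAddCommGroup V] [NormedSpace ℝ V]

/-- The map `M → V` whose value at `m` has barycentric coordinates `ψ j m` with respect to the
vertices `v j`. -/
def barycentricMap {J : Type*} [Fintype J] (ψ : J → C(M, ℝ)) (v : J → V) : C(M, V) where
  toFun m := ∑ j, ψ j m • v j

omit [CompactSpace M] [T2Space M] in
theorem continuous_barycentricMap {J : Type*} [Fintype J] (ψ : J → C(M, ℝ)) :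
    Continuous (barycentricMap ψ : (J → V) → C(M, V)) :=
  ContinuousMap.continuous_of_continuous_uncurry _ <| by
    simp only [Function.uncurry_def, barycentricMap, ContinuousMap.coe_mk]
    fun_prop

theorem CovDimLE.exists_barycentricMap_mem (hM : CovDimLE M D) {K : Set (M × M)}
    (hK : IsClosed K) (hKne : ∀ p ∈ K, p.1 ≠ p.2) (F : C(M, V)) {𝓤 : Set C(M, V)}
    (h𝓤 : 𝓤 ∈ 𝓝 F) :
    ∃ (k : ℕ) (ψ : Fin k → C(M, ℝ)) (v : Fin k → V),
      (∀ m, (ψ · m) ∈ simplexSkeleton (Fin k) D) ∧ (∀ p ∈ K, (ψ · p.1) ≠ (ψ · p.2)) ∧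
        barycentricMap ψ v ∈ 𝓤 := by
  obtain ⟨ε, hε, hε𝓤⟩ := Metric.nhds_basis_closedBall.mem_iff.1 h𝓤
  have hloc (m : M) : ∃ W, IsOpen W ∧ m ∈ W ∧ (∀ x ∈ W, dist (F x) (F m) < ε) ∧
      ∀ x ∈ W, ∀ y ∈ W, (x, y) ∉ K := by
    have hF : F ⁻¹' Metric.ball (F m) ε ∈ 𝓝 m :=
      F.continuous.continuousAt.preimage_mem_nhds (Metric.ball_mem_nhds _ hε)
    have hK' : Kᶜ ∈ 𝓝 m ×ˢ 𝓝 m := by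
      rw [← nhds_prod_eq]
      exact hK.isOpen_compl.mem_nhds fun hm => hKne _ hm rfl
    obtain ⟨t, ht, htK⟩ := Filter.mem_prod_self_iff.1 hK'
    obtain ⟨W, hW, hWo, hmW⟩ := mem_nhds_iff.1 (Filter.inter_mem hF ht)
    exact ⟨W, hWo, hmW, fun x hx => (hW hx).1, fun x hx y hy => htK ⟨(hW hx).2, (hW hy).2⟩⟩
  choose W hWo hmW hWF hWK using hloc
  obtain ⟨k, ρ, hρ, hρW⟩ :=
    hM.exists_partitionOfUnity hWo (iUnion_eq_univ_iff.2 fun m => ⟨m, hmW m⟩)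
  choose c hc using hρW
  refine ⟨k, ρ, fun j => F (c j), hρ, fun p hp heq => ?_, hε𝓤 ?_⟩
  · obtain ⟨j, hj⟩ := exists_pos_of_mem_stdSimplex (hρ p.1).1
    exact hWK (c j) _ (hc j hj.ne') _ (hc j (congrFun heq j ▸ hj).ne') hp
  · refine (ContinuousMap.dist_le hε.le).2 fun m => ?_
    have hball := ρ.finsum_smul_mem_convex (g := fun j _ => F (c j)) (mem_univ m)
      (fun j hj => Metric.mem_ball'.2 (hWF (c j) m (hc j hj))) (convex_ball (F m) ε)
    rw [finsum_eq_sum_of_fintype] at hball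
    exact (Metric.mem_ball.1 hball).le

theorem CovDimLE.dense_of_forall_barycentricMap [Nonempty M] (hM : CovDimLE M D)
    {K : Set (M × M)} (hK : IsClosed K) (hKne : ∀ p ∈ K, p.1 ≠ p.2) {𝓢 : Set C(M, V)}
    (h𝓢 : ∀ (k : ℕ) [Nonempty (Fin k)] (ψ : Fin k → C(M, ℝ)),
      (∀ m, (ψ · m) ∈ simplexSkeleton (Fin k) D) → (∀ p ∈ K, (ψ · p.1) ≠ (ψ · p.2)) →
        Dense {v | barycentricMap ψ v ∈ 𝓢}) : Dense 𝓢 := by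
  refine dense_iff_inter_open.2 fun 𝓤 h𝓤 ⟨F, hF⟩ => ?_
  obtain ⟨k, ψ, v₀, hψ, hψK, hv₀⟩ := hM.exists_barycentricMap_mem hK hKne F (h𝓤.mem_nhds hF)
  have : Nonempty (Fin k) := ‹Nonempty M›.elim fun m =>
    (exists_pos_of_mem_stdSimplex (hψ m).1).nonempty
  obtain ⟨v, hv, hv𝓢⟩ := (h𝓢 k ψ hψ hψK).inter_open_nonempty _
    (h𝓤.preimage (continuous_barycentricMap ψ)) ⟨v₀, hv₀⟩
  exact ⟨_, hv, hv𝓢⟩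

variable [FiniteDimensional ℝ V] {L : V →L[ℝ] V}

theorem CovDimLE.dense_setOf_forall_mem_ne (hM : CovDimLE M D) (hD : 2 * D < finrank ℝ V)
    (hL : ‖L‖ ≤ 1) {K : Set (M × M)} (hK : IsClosed K) (hKne : ∀ p ∈ K, p.1 ≠ p.2) :
    Dense {F : C(M, V) | ∀ p ∈ K, F p.1 ≠ L (F p.2)} := by
  rcases isEmpty_or_nonempty M with _ | _
  · exact dense_univ.mono fun F _ p => isEmptyElim p.1
  refine hM.dense_of_forall_barycentricMap hK hKne fun k _ ψ hψ hψK =>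
    (dense_compl_of_dimH_lt_finrank
      (dimH_setOf_exists_ne_mem_simplexSkeleton_lt (J := Fin k) hD hL)).mono fun v hv p hp heq => ?_
  exact hv ⟨_, hψ p.1, _, hψ p.2, hψK p hp, heq⟩

theorem CovDimLE.dense_setOf_forall_ne (hM : CovDimLE M D) (hD : 2 * D < finrank ℝ V)
    (hL : ‖L‖ ≤ 1)
    (hfix : D + finrank ℝ (LinearMap.eqLocus (L : V →ₗ[ℝ] V) LinearMap.id) < finrank ℝ V) :
    Dense {F : C(M, V) | ∀ m m', F m ≠ L (F m')} := by
  rcases isEmpty_or_nonempty M with _ | _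
  · exact dense_univ.mono fun F _ => isEmptyElim
  refine hM.dense_of_forall_barycentricMap isClosed_empty (fun p hp => hp.elim) fun k _ ψ hψ _ =>
    (dense_compl_of_dimH_lt_finrank ((dimH_union _ _).trans_lt (max_lt
      (dimH_setOf_exists_ne_mem_simplexSkeleton_lt (J := Fin k) hD hL)
      (dimH_setOf_exists_sum_smul_mem_submodule_lt hfix)))).mono ?_
  intro v hv m m' heq
  refine hv ?_
  by_cases hψeq : (ψ · m) = (ψ · m')
  · refine Or.inr ⟨_, hψ m, ?_⟩
    have hF : barycentricMap ψ v m = barycentricMap ψ v m' :=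
      congrArg (fun a : Fin k → ℝ => ∑ j, a j • v j) hψeq
    exact (heq.trans (congrArg L hF.symm)).symm
  · exact Or.inl ⟨_, hψ m, _, hψ m', hψeq, heq⟩

end CoveringDimension

section CoordinateComposition

variable {E : Type*} [Fintype E]

/-- Precomposition with a self-map `τ` of the index set, acting on `E → ℝ`. -/
def compCLM (τ : E → E) : (E → ℝ) →L[ℝ] (E → ℝ) :=
  ContinuousLinearMap.pi fun e => ContinuousLinearMap.proj (τ e)

theorem norm_compCLM_le_one (τ : E → E) : ‖compCLM τ‖ ≤ 1 := by
  refine ContinuousLinearMap.opNorm_le_bound _ zero_le_one fun u => ?_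
  rw [one_mul, pi_norm_le_iff_of_nonneg (norm_nonneg u)]
  exact fun e => norm_le_pi_norm u (τ e)

theorem two_mul_card_quot_le {τ : E → E} (hτ : ∀ e, τ e ≠ e) :
    2 * Nat.card (Quot fun e e' => e' = τ e) ≤ Fintype.card E := by
  classical
  have := Fintype.ofFinite (Quot fun e e' => e' = τ e)
  let r : E → Quot fun e e' => e' = τ e := Quot.mk _
  have himage : Finset.univ.image r = Finset.univ :=
    Finset.image_univ_of_surjective Quot.mk_surjective
  rw [Nat.card_eq_fintype_card, ← Finset.card_univ, ← Finset.card_univ, ← himage]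
  refine Finset.mul_card_image_le_card _ 2 fun q hq => ?_
  obtain ⟨e, -, rfl⟩ := Finset.mem_image.1 hq
  have hτe : r (τ e) = r e := (Quot.sound (r := fun e e' => e' = τ e) rfl).symm
  rw [← Finset.card_pair (hτ e)]
  exact Finset.card_le_card (by simp [Finset.insert_subset_iff, hτe])

theorem two_mul_finrank_eqLocus_compCLM_le {τ : E → E} (hτ : ∀ e, τ e ≠ e) :
    2 * finrank ℝ (LinearMap.eqLocus (compCLM τ : (E → ℝ) →ₗ[ℝ] (E → ℝ)) LinearMap.id) ≤
      Fintype.card E := by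
  let r : E → Quot fun e e' => e' = τ e := Quot.mk _
  have hle : LinearMap.eqLocus (compCLM τ : (E → ℝ) →ₗ[ℝ] (E → ℝ)) LinearMap.id ≤
      (LinearMap.funLeft ℝ ℝ r).range := fun u hu =>
    ⟨Quot.lift u fun e _ he => he ▸ (congrFun hu e).symm, rfl⟩
  have := Fintype.ofFinite (Quot fun e e' => e' = τ e)
  calc 2 * finrank ℝ (LinearMap.eqLocus (compCLM τ : (E → ℝ) →ₗ[ℝ] (E → ℝ)) LinearMap.id)
      ≤ 2 * finrank ℝ ((Quot fun e e' => e' = τ e) → ℝ) :=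
        Nat.mul_le_mul_left 2 ((Submodule.finrank_mono hle).trans (LinearMap.finrank_range_le _))
    _ = 2 * Nat.card (Quot fun e e' => e' = τ e) := by
        rw [finrank_fintype_fun_eq_card, Nat.card_eq_fintype_card]
    _ ≤ Fintype.card E := two_mul_card_quot_le hτ

end CoordinateComposition

section Copies

variable {X M E : Type*} [TopologicalSpace X] [CompactSpace X] [T2Space X] [TopologicalSpace M]
  [CompactSpace M]

/-- Restriction of functions on `X` to the copies `t e` of `M` in `X`, simultaneously for all
`e`. -/
def restrictCopies (t : E → C(M, X)) : C(X, ℝ) →L[ℝ] C(M, E → ℝ) where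
  toFun h := ⟨fun m e => h (t e m), by fun_prop⟩
  map_add' _ _ := rfl
  map_smul' _ _ := rfl
  cont := ContinuousMap.continuous_of_continuous_uncurry _ <| by
    simp only [Function.uncurry_def, ContinuousMap.coe_mk]
    fun_prop

theorem surjective_restrictCopies [Finite E] {t : E → C(M, X)}
    (ht : Injective fun q : E × M => t q.1 q.2) : Surjective (restrictCopies t) := by
  intro G
  let _ : TopologicalSpace E := ⊥
  have : DiscreteTopology E := ⟨rfl⟩
  have hcont : Continuous fun q : E × M => t q.1 q.2 :=
    continuous_prod_of_discrete_left.2 fun e => (t e).continuous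
  let g : C(E × M, ℝ) :=
    ⟨fun q => G q.2 q.1, continuous_prod_of_discrete_left.2 fun e =>
      (continuous_apply e).comp G.continuous⟩
  obtain ⟨h, hh⟩ := g.exists_extension (hcont.isClosedEmbedding ht)
  exact ⟨h, ContinuousMap.ext fun m => funext fun e => DFunLike.congr_fun hh (e, m)⟩

theorem dense_preimage_restrictCopies [Finite E] {t : E → C(M, X)}
    (ht : Injective fun q : E × M => t q.1 q.2) {𝓢 : Set C(M, E → ℝ)} (h𝓢 : Dense 𝓢) :
    Dense (restrictCopies t ⁻¹' 𝓢) := by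
  cases nonempty_fintype E
  exact h𝓢.preimage ((restrictCopies t).isOpenMap (surjective_restrictCopies ht))

variable [T2Space M] [Fintype E] {D : ℕ} {t : E → C(M, X)}

theorem CovDimLE.dense_setOf_forall_mem_exists_ne (hM : CovDimLE M D)
    (hD : 2 * D < Fintype.card E) (ht : Injective fun q : E × M => t q.1 q.2)
    {K : Set (M × M)} (hK : IsClosed K) (hKne : ∀ p ∈ K, p.1 ≠ p.2) :
    Dense {h : C(X, ℝ) | ∀ p ∈ K, ∃ e, h (t e p.1) ≠ h (t e p.2)} := by
  have hE : 2 * D < finrank ℝ (E → ℝ) := by rwa [finrank_fintype_fun_eq_card]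
  refine (dense_preimage_restrictCopies ht (hM.dense_setOf_forall_mem_ne hE
    ContinuousLinearMap.norm_id_le hK hKne)).mono fun h hh p hp => ?_
  exact Function.ne_iff.1 (hh p hp)

theorem CovDimLE.dense_setOf_forall_exists_comp_ne (hM : CovDimLE M D)
    (hD : 2 * D < Fintype.card E) (ht : Injective fun q : E × M => t q.1 q.2)
    {τ : E → E} (hτ : ∀ e, τ e ≠ e) :
    Dense {h : C(X, ℝ) | ∀ m m', ∃ e, h (t e m) ≠ h (t (τ e) m')} := by
  have hE : 2 * D < finrank ℝ (E → ℝ) := by rwa [finrank_fintype_fun_eq_card]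
  have hfix : D + finrank ℝ (LinearMap.eqLocus (compCLM τ : (E → ℝ) →ₗ[ℝ] (E → ℝ)) LinearMap.id) <
      finrank ℝ (E → ℝ) := by
    have := two_mul_finrank_eqLocus_compCLM_le hτ
    rw [finrank_fintype_fun_eq_card]
    omega
  refine (dense_preimage_restrictCopies ht (hM.dense_setOf_forall_ne hE
    (norm_compCLM_le_one τ) hfix)).mono fun h hh m m' => ?_
  exact Function.ne_iff.1 (hh m m')

end Copies

section Baire

theorem eventually_residual_forall_of_nhdsWithin {Y Z : Type*} [TopologicalSpace Y]
    [TopologicalSpace Z] [SecondCountableTopology Z] {R : Set (Y × Z)} (hR : IsOpen R) {S : Set Z}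
    (hS : ∀ z ∈ S, ∃ K ∈ 𝓝[S] z, IsCompact K ∧ Dense {y | ∀ w ∈ K, (y, w) ∈ R}) :
    ∀ᶠ y in residual Y, ∀ z ∈ S, (y, z) ∈ R := by
  choose! K hKS hKc hKd using hS
  obtain ⟨c, hcS, hc, hScover⟩ := TopologicalSpace.countable_cover_nhdsWithin hKS
  have hres (z : Z) (hz : z ∈ c) : ∀ᶠ y in residual Y, ∀ w ∈ K z, (y, w) ∈ R := by
    refine residual_of_dense_open (isOpen_iff_mem_nhds.2 fun y hy => ?_) (hKd z (hcS hz))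
    exact (hKc z (hcS hz)).eventually_forall_of_forall_eventually fun w hw =>
      hR.mem_nhds (hy w hw)
  filter_upwards [(eventually_countable_ball hc).2 hres] with y hy z hz
  obtain ⟨w, hw, hzw⟩ := mem_iUnion₂.1 (hScover hz)
  exact hy w hw z hzw

end Baire

section Orbits

variable {X : Type*} [TopologicalSpace X] (T : X ≃ₜ X)

theorem zpow_add_apply_homeomorph (i j : ℤ) (x : X) : (T ^ (i + j)) x = (T ^ i) ((T ^ j) x) := by
  rw [zpow_add, Homeomorph.mul_apply]

theorem zpow_apply_eq_self_iff_minimalPeriod_dvd {i : ℤ} {x : X} :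
    (T ^ i) x = x ↔ (minimalPeriod T x : ℤ) ∣ i := by
  let _ : MulAction (X ≃ₜ X) X :=
    { smul := fun f x => f x
      one_smul := fun _ => rfl
      mul_smul := fun _ _ _ => rfl }
  exact MulAction.zpow_smul_eq_iff_minimalPeriod_dvd (a := T) (b := x)

theorem zpow_apply_eq_zpow_apply_iff {i j : ℤ} {x y : X} :
    (T ^ i) x = (T ^ j) y ↔ (T ^ (i - j)) x = y := by
  rw [← (T ^ j).injective.eq_iff (b := y), ← zpow_add_apply_homeomorph, add_sub_cancel]

theorem minimalPeriod_zpow_apply (i : ℤ) (x : X) :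
    minimalPeriod T ((T ^ i) x) = minimalPeriod T x := by
  have hdvd (n : ℤ) : (minimalPeriod T ((T ^ i) x) : ℤ) ∣ n ↔ (minimalPeriod T x : ℤ) ∣ n := by
    rw [← zpow_apply_eq_self_iff_minimalPeriod_dvd, ← zpow_apply_eq_self_iff_minimalPeriod_dvd,
      ← zpow_add_apply_homeomorph, add_comm, zpow_add_apply_homeomorph, (T ^ i).injective.eq_iff]
  exact Nat.dvd_antisymm (Int.natCast_dvd_natCast.1 ((hdvd _).2 dvd_rfl))
    (Int.natCast_dvd_natCast.1 ((hdvd _).1 dvd_rfl))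

theorem image_zpow_ptsOfPeriod (p : ℕ) (i : ℤ) : (T ^ i) '' ptsOfPeriod T p = ptsOfPeriod T p := by
  ext x
  rw [← (T ^ i).coe_toEquiv, Equiv.image_eq_preimage_symm]
  simp only [mem_preimage, mem_ptsOfPeriod, isPeriodicPt_iff_minimalPeriod_dvd]
  rw [← minimalPeriod_zpow_apply T (-i) x, zpow_neg]
  rfl

theorem zpow_val_add_apply {p : ℕ} [NeZero p] {x : X} (hx : x ∈ ptsOfPeriod T p) (e : ZMod p)
    (l : ℤ) : (T ^ ((e + (l : ZMod p)).val : ℤ)) x = (T ^ (e.val : ℤ)) ((T ^ l) x) := by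
  rw [← zpow_add_apply_homeomorph, zpow_apply_eq_zpow_apply_iff,
    zpow_apply_eq_self_iff_minimalPeriod_dvd]
  refine (Int.natCast_dvd_natCast.2 (IsPeriodicPt.minimalPeriod_dvd hx)).trans ?_
  simp [← ZMod.intCast_zmod_eq_zero_iff_dvd]

theorem isClosed_ptsOfPeriod [T2Space X] {f : X → X} (hf : Continuous f) (p : ℕ) :
    IsClosed (ptsOfPeriod f p) :=
  isClosed_eq (hf.iterate p) continuous_id

theorem zmod_eq_of_dvd_val_sub_val {p : ℕ} [NeZero p] {e e' : ZMod p}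
    (h : (p : ℤ) ∣ (e.val : ℤ) - e'.val) : e = e' := by
  simpa [sub_eq_zero] using (ZMod.intCast_zmod_eq_zero_iff_dvd _ p).2 h

/-- The observable `h` separates the points `x` and `y` at some time of their orbits under `T`. -/
def OrbitSeparates (h : C(X, ℝ)) (x y : X) : Prop :=
  ∃ i : ℤ, h ((T ^ i) x) ≠ h ((T ^ i) y)

theorem isOpen_setOf_orbitSeparates [LocallyCompactSpace X] :
    IsOpen {q : C(X, ℝ) × (X × X) | OrbitSeparates T q.1 q.2.1 q.2.2} := by
  simp only [OrbitSeparates, ofPred_exists]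
  refine isOpen_iUnion fun i => isOpen_ne_fun ?_ ?_
  · exact continuous_fst.eval ((T ^ i).continuous.comp continuous_snd.fst)
  · exact continuous_fst.eval ((T ^ i).continuous.comp continuous_snd.snd)

end Orbits

section Injectivity

variable {E X : Type*} [TopologicalSpace X]

theorem exists_isCompact_subset_interior_injOn_uncurry [Finite E] [LocallyCompactSpace X]
    {Y : Type*} [TopologicalSpace Y] [T2Space Y] {f : E → X → Y} (hf : ∀ e, Continuous (f e))
    (hinj : ∀ e, Injective (f e)) {P : Set X} (hP : IsCompact P)
    (hfP : InjOn (uncurry f) (univ ×ˢ P)) :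
    ∃ M, IsCompact M ∧ P ⊆ interior M ∧ InjOn (uncurry f) (univ ×ˢ M) := by
  let _ : TopologicalSpace E := ⊥
  have : DiscreteTopology E := ⟨rfl⟩
  have hcont : Continuous (uncurry f) := continuous_prod_of_discrete_left.2 hf
  obtain ⟨W, hW, hPW, hfW⟩ := hfP.exists_isOpen_superset (isCompact_univ.prod hP)
    (fun q _ => hcont.continuousAt) fun q _ => by
      refine ⟨{q.1} ×ˢ univ, ((isOpen_discrete _).prod isOpen_univ).mem_nhds ⟨rfl, trivial⟩, ?_⟩
      rintro ⟨e, a⟩ ⟨he, -⟩ ⟨e', b⟩ ⟨he', -⟩ hab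
      obtain rfl : e = e' := he.trans he'.symm
      exact Prod.ext rfl (hinj e hab)
  obtain ⟨U, V, -, hV, hU, hPV, hUV⟩ := generalized_tube_lemma isCompact_univ hP hW hPW
  obtain ⟨M, hM, hPM, hMV⟩ := exists_compact_between hP hV hPV
  exact ⟨M, hM, hPM, hfW.mono ((prod_mono hU hMV).trans hUV)⟩

theorem injOn_uncurry_zpow (T : X ≃ₜ X) {n : E → ℤ} {p : ℕ} {P : Set X}
    (hP : ∀ z ∈ P, minimalPeriod T z = p) (hn : ∀ e e', (p : ℤ) ∣ n e - n e' → e = e')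
    (hne : P.Pairwise fun a b => ∀ e e', (T ^ n e) a ≠ (T ^ n e') b) :
    InjOn (uncurry fun e => ⇑(T ^ n e)) (univ ×ˢ P) := by
  rintro ⟨e, a⟩ ⟨-, ha⟩ ⟨e', b⟩ ⟨-, hb⟩ (hab : (T ^ n e) a = (T ^ n e') b)
  obtain rfl : a = b := hne.eq ha hb fun h => h e e' hab
  rw [zpow_apply_eq_zpow_apply_iff, zpow_apply_eq_self_iff_minimalPeriod_dvd, hP a ha] at hab
  exact Prod.ext (hn e e' hab) rfl

end Injectivity

section Perturbation

variable {E X : Type*} [Fintype E] [TopologicalSpace X] [CompactSpace X] [T2Space X] {T : X ≃ₜ X}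
  {A : Set X} {D : ℕ} {n : E → ℤ}

omit [Fintype E] [CompactSpace X] [T2Space X] in
theorem injective_restrict_zpow (hn : InjOn (uncurry fun e => ⇑(T ^ n e)) (univ ×ˢ A)) :
    Injective fun q : E × A => ((T ^ n q.1 : X ≃ₜ X) : C(X, X)).restrict A q.2 := by
  rintro ⟨e, a⟩ ⟨e', b⟩ hab
  have h : (e, (a : X)) = (e', (b : X)) := hn ⟨trivial, a.2⟩ ⟨trivial, b.2⟩ hab
  exact Prod.ext (Prod.ext_iff.1 h).1 (Subtype.ext (Prod.ext_iff.1 h).2)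

theorem CovDimLE.dense_setOf_forall_mem_orbitSeparates (hAD : CovDimLE A D) (hA : IsCompact A)
    (hD : 2 * D < Fintype.card E) (hn : InjOn (uncurry fun e => ⇑(T ^ n e)) (univ ×ˢ A))
    {K : Set (X × X)} (hK : IsClosed K) (hKA : K ⊆ A ×ˢ A) (hKne : ∀ p ∈ K, p.1 ≠ p.2) :
    Dense {h : C(X, ℝ) | ∀ p ∈ K, OrbitSeparates T h p.1 p.2} := by
  have : CompactSpace A := isCompact_iff_compactSpace.1 hA
  let ι : A × A → X × X := Prod.map (↑) (↑)
  have hι : Continuous ι := continuous_subtype_val.prodMap continuous_subtype_val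
  refine (hAD.dense_setOf_forall_mem_exists_ne
    (t := fun e => ((T ^ n e : X ≃ₜ X) : C(X, X)).restrict A) hD (injective_restrict_zpow hn)
    (hK.preimage hι) fun q hq h => hKne _ hq (congrArg Subtype.val h)).mono fun h hh p hp => ?_
  obtain ⟨e, he⟩ := hh (⟨p.1, (hKA hp).1⟩, ⟨p.2, (hKA hp).2⟩) hp
  exact ⟨n e, he⟩

theorem CovDimLE.dense_setOf_forall_orbitSeparates_zpow (hAD : CovDimLE A D) (hA : IsCompact A)
    (hD : 2 * D < Fintype.card E) (hn : InjOn (uncurry fun e => ⇑(T ^ n e)) (univ ×ˢ A))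
    {τ : E → E} (hτ : ∀ e, τ e ≠ e) {l : ℤ}
    (hτl : ∀ e, ∀ b ∈ A, (T ^ n (τ e)) b = (T ^ n e) ((T ^ l) b)) :
    Dense {h : C(X, ℝ) | ∀ a ∈ A, ∀ b ∈ A, OrbitSeparates T h a ((T ^ l) b)} := by
  have : CompactSpace A := isCompact_iff_compactSpace.1 hA
  refine (hAD.dense_setOf_forall_exists_comp_ne
    (t := fun e => ((T ^ n e : X ≃ₜ X) : C(X, X)).restrict A) hD (injective_restrict_zpow hn)
    hτ).mono fun h hh a ha b hb => ?_
  obtain ⟨e, he⟩ := hh ⟨a, ha⟩ ⟨b, hb⟩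
  exact ⟨n e, hτl e b hb ▸ he⟩

end Perturbation

section Local

variable {X : Type*} [TopologicalSpace X] [CompactSpace X] [T2Space X] {T : X ≃ₜ X} {p D : ℕ}
  {x y : X}

theorem exists_isCompact_mem_nhdsWithin_injOn_zpow {E : Type*} [Finite E] {n : E → ℤ} {F P : Set X}
    (hF : IsClosed F) (hFD : CovDimLE F D) (hP : IsCompact P)
    (hn : InjOn (uncurry fun e => ⇑(T ^ n e)) (univ ×ˢ P)) :
    ∃ A ⊆ F, IsCompact A ∧ CovDimLE A D ∧ (∀ z ∈ P, A ∈ 𝓝[F] z) ∧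
      InjOn (uncurry fun e => ⇑(T ^ n e)) (univ ×ˢ A) := by
  obtain ⟨M, hM, hPM, hMn⟩ := exists_isCompact_subset_interior_injOn_uncurry
    (fun e => (T ^ n e).continuous) (fun e => (T ^ n e).injective) hP hn
  refine ⟨F ∩ M, inter_subset_left, hM.inter_left hF, hFD.of_isClosedEmbedding
    (IsClosedEmbedding.inclusion inter_subset_left ?_),
    fun z hz => inter_mem_nhdsWithin F (mem_interior_iff_mem_nhds.1 (hPM hz)),
    hMn.mono (prod_mono_right inter_subset_right)⟩
  exact (hF.inter hM.isClosed).preimage continuous_subtype_val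

theorem exists_isCompact_dense_orbitSeparates_of_ne {E : Type*} [Fintype E] {n : E → ℤ}
    (hFD : CovDimLE (ptsOfPeriod T p) D) (hD : 2 * D < Fintype.card E)
    (hn : ∀ e e', (p : ℤ) ∣ n e - n e' → e = e') (hx : minimalPeriod T x = p)
    (hy : minimalPeriod T y = p) (hxy : x ≠ y) (hne : ∀ e e', (T ^ n e) x ≠ (T ^ n e') y) :
    ∃ K ∈ 𝓝[ptsOfPeriod T p ×ˢ ptsOfPeriod T p] (x, y), IsCompact K ∧
      Dense {h : C(X, ℝ) | ∀ q ∈ K, OrbitSeparates T h q.1 q.2} := by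
  obtain ⟨A, -, hA, hAD, hxyA, hAn⟩ := exists_isCompact_mem_nhdsWithin_injOn_zpow
    (isClosed_ptsOfPeriod T.continuous p) hFD (toFinite {x, y}).isCompact <|
      injOn_uncurry_zpow T (by simp [hx, hy]) hn <|
        pairwise_pair.2 fun _ => ⟨hne, fun e e' => (hne e' e).symm⟩
  obtain ⟨C, hC, hCne, hCc⟩ := local_compact_nhds
    ((isOpen_ne_fun continuous_fst continuous_snd).mem_nhds hxy : {q : X × X | _} ∈ 𝓝 (x, y))
  have hK : IsCompact (A ×ˢ A ∩ C) := (hA.prod hA).inter hCc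
  exact ⟨A ×ˢ A ∩ C, Filter.inter_mem (nhdsWithin_prod (hxyA x (by simp)) (hxyA y (by simp)))
    (mem_nhdsWithin_of_mem_nhds hC), hK, hAD.dense_setOf_forall_mem_orbitSeparates hA hD hAn
      hK.isClosed inter_subset_left fun q hq => hCne hq.2⟩

theorem exists_isCompact_dense_orbitSeparates_zpow [NeZero p]
    (hFD : CovDimLE (ptsOfPeriod T p) D) (hD : 2 * D < p) (hx : minimalPeriod T x = p) {l : ℤ}
    (hl : ¬ (p : ℤ) ∣ l) :
    ∃ K ∈ 𝓝[ptsOfPeriod T p ×ˢ ptsOfPeriod T p] (x, (T ^ l) x), IsCompact K ∧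
      Dense {h : C(X, ℝ) | ∀ q ∈ K, OrbitSeparates T h q.1 q.2} := by
  obtain ⟨A, hAF, hA, hAD, hxA, hAn⟩ := exists_isCompact_mem_nhdsWithin_injOn_zpow
    (n := fun e : ZMod p => (e.val : ℤ)) (isClosed_ptsOfPeriod T.continuous p) hFD
    (isCompact_singleton (x := x)) <|
      injOn_uncurry_zpow T (by simp [hx]) (fun e e' => zmod_eq_of_dvd_val_sub_val)
        (pairwise_singleton _ _)
  have hdense := hAD.dense_setOf_forall_orbitSeparates_zpow (τ := (· + (l : ZMod p))) hA
    (by rwa [ZMod.card]) hAn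
    (fun e => by rwa [Ne, add_eq_left, ZMod.intCast_zmod_eq_zero_iff_dvd])
    fun e b hb => zpow_val_add_apply T (hAF hb) e l
  refine ⟨A ×ˢ ((T ^ l) '' A), nhdsWithin_prod (hxA x rfl) ?_,
    hA.prod (hA.image (T ^ l).continuous), hdense.mono ?_⟩
  · rw [← image_zpow_ptsOfPeriod T p l, ← (T ^ l).isOpenEmbedding.map_nhdsWithin_eq]
    exact Filter.image_mem_map (hxA x rfl)
  · rintro h hh ⟨a, -⟩ ⟨ha, b, hb, rfl⟩
    exact hh a ha b hb

theorem exists_isCompact_dense_orbitSeparates_of_periodic [NeZero p]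
    (hFD : CovDimLE (ptsOfPeriod T p) D) (hD : 2 * D < p) (hx : minimalPeriod T x = p)
    (hy : minimalPeriod T y = p) (hxy : x ≠ y) :
    ∃ K ∈ 𝓝[ptsOfPeriod T p ×ˢ ptsOfPeriod T p] (x, y), IsCompact K ∧
      Dense {h : C(X, ℝ) | ∀ q ∈ K, OrbitSeparates T h q.1 q.2} := by
  by_cases hl : ∃ l : ℤ, (T ^ l) x = y
  · obtain ⟨l, rfl⟩ := hl
    refine exists_isCompact_dense_orbitSeparates_zpow hFD hD hx fun hdvd => hxy ?_
    exact ((zpow_apply_eq_self_iff_minimalPeriod_dvd T).2 (hx ▸ hdvd)).symm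
  · exact exists_isCompact_dense_orbitSeparates_of_ne (n := fun e : ZMod p => (e.val : ℤ)) hFD
      (by rwa [ZMod.card]) (fun e e' => zmod_eq_of_dvd_val_sub_val) hx hy hxy
      fun e e' h => hl ⟨_, (zpow_apply_eq_zpow_apply_iff T).1 h⟩

theorem exists_isCompact_dense_orbitSeparates_of_aperiodic (hXD : CovDimLE (ptsOfPeriod T 0) D)
    (hx : minimalPeriod T x = 0) (hy : minimalPeriod T y = 0) (hxy : x ≠ y) :
    ∃ K ∈ 𝓝[ptsOfPeriod T 0 ×ˢ ptsOfPeriod T 0] (x, y), IsCompact K ∧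
      Dense {h : C(X, ℝ) | ∀ q ∈ K, OrbitSeparates T h q.1 q.2} := by
  -- If `y = T ^ l x`, sampling at the multiples of `2 * l` keeps the two orbits apart.
  obtain ⟨N, hN, hNxy⟩ : ∃ N : ℤ, N ≠ 0 ∧ ∀ k : ℤ, (T ^ (N * k)) x ≠ y := by
    by_cases hl : ∃ l : ℤ, (T ^ l) x = y
    · obtain ⟨l, rfl⟩ := hl
      have hl0 : l ≠ 0 := by
        rintro rfl
        exact hxy rfl
      refine ⟨2 * l, mul_ne_zero two_ne_zero hl0, fun k hk => ?_⟩
      rw [zpow_apply_eq_zpow_apply_iff, zpow_apply_eq_self_iff_minimalPeriod_dvd, hx,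
        Nat.cast_zero, zero_dvd_iff, show 2 * l * k - l = l * (2 * k - 1) by ring, mul_eq_zero,
        or_iff_right hl0] at hk
      omega
    · push Not at hl
      exact ⟨1, one_ne_zero, fun k => hl _⟩
  refine exists_isCompact_dense_orbitSeparates_of_ne (n := fun e : Fin (2 * D + 1) => N * (e : ℤ))
    hXD (by simp) (fun e e' h => Fin.ext ?_) hx hy hxy fun e e' h => ?_
  · rw [Nat.cast_zero, zero_dvd_iff, ← mul_sub, mul_eq_zero, or_iff_right hN] at h
    omega
  · rw [zpow_apply_eq_zpow_apply_iff, ← mul_sub] at h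
    exact hNxy _ h

end Local

section Generic

variable {X : Type*} [TopologicalSpace X] {T : X ≃ₜ X}

theorem eventually_residual_forall_orbitSeparates [CompactSpace X] [T2Space X]
    [SecondCountableTopology X]
    (hT : ∀ p : ℕ, ∃ D, CovDimLE (ptsOfPeriod T p) D ∧ (0 < p → 2 * D < p)) :
    ∀ᶠ h in residual C(X, ℝ),
      ∀ x y, x ≠ y → minimalPeriod T x = minimalPeriod T y → OrbitSeparates T h x y := by
  have hp (p : ℕ) : ∀ᶠ h in residual C(X, ℝ),
      ∀ z ∈ {z : X × X | z.1 ≠ z.2 ∧ minimalPeriod T z.1 = p ∧ minimalPeriod T z.2 = p},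
        OrbitSeparates T h z.1 z.2 := by
    refine eventually_residual_forall_of_nhdsWithin (isOpen_setOf_orbitSeparates T) ?_
    rintro ⟨x, y⟩ ⟨hxy, hx, hy⟩
    obtain ⟨D, hFD, hD⟩ := hT p
    obtain ⟨K, hK, hKc, hKd⟩ : ∃ K ∈ 𝓝[ptsOfPeriod T p ×ˢ ptsOfPeriod T p] (x, y),
        IsCompact K ∧ Dense {h : C(X, ℝ) | ∀ q ∈ K, OrbitSeparates T h q.1 q.2} := by
      rcases p.eq_zero_or_pos with rfl | hp
      · exact exists_isCompact_dense_orbitSeparates_of_aperiodic hFD hx hy hxy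
      · have : NeZero p := ⟨hp.ne'⟩
        exact exists_isCompact_dense_orbitSeparates_of_periodic hFD (hD hp) hx hy hxy
    refine ⟨K, nhdsWithin_mono _ (fun z hz => ?_) hK, hKc, hKd⟩
    exact ⟨hz.2.1 ▸ isPeriodicPt_minimalPeriod T z.1, hz.2.2 ▸ isPeriodicPt_minimalPeriod T z.2⟩
  filter_upwards [eventually_countable_forall.2 hp] with h hh x y hxy hxy'
  exact hh (minimalPeriod T y) (x, y) ⟨hxy, hxy', rfl⟩

theorem minimalPeriod_dvd_of_not_orbitSeparates {h : C(X, ℝ)}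
    (hh : ∀ x y, x ≠ y → minimalPeriod T x = minimalPeriod T y → OrbitSeparates T h x y) {x y : X}
    (hxy : ¬ OrbitSeparates T h x y) : minimalPeriod T y ∣ minimalPeriod T x := by
  simp only [OrbitSeparates, not_exists, not_not] at hxy
  set p := minimalPeriod T x
  have hx : (T ^ (p : ℤ)) x = x := (zpow_apply_eq_self_iff_minimalPeriod_dvd T).2 dvd_rfl
  by_contra hnd
  have hy : y ≠ (T ^ (p : ℤ)) y := fun h => hnd
    (Int.natCast_dvd_natCast.1 ((zpow_apply_eq_self_iff_minimalPeriod_dvd T).1 h.symm))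
  obtain ⟨i, hi⟩ := hh _ _ hy (minimalPeriod_zpow_apply T p y).symm
  apply hi
  calc h ((T ^ i) y) = h ((T ^ i) x) := (hxy i).symm
    _ = h ((T ^ (i + p)) x) := by rw [zpow_add_apply_homeomorph, hx]
    _ = h ((T ^ (i + p)) y) := hxy (i + p)
    _ = h ((T ^ i) ((T ^ (p : ℤ)) y)) := by rw [zpow_add_apply_homeomorph]

theorem orbitSeparates_of_ne {h : C(X, ℝ)}
    (hh : ∀ x y, x ≠ y → minimalPeriod T x = minimalPeriod T y → OrbitSeparates T h x y) {x y : X}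
    (hxy : x ≠ y) : OrbitSeparates T h x y := by
  by_contra hns
  have hns' : ¬ OrbitSeparates T h y x := fun ⟨i, hi⟩ => hns ⟨i, hi.symm⟩
  exact hns <| hh x y hxy <| Nat.dvd_antisymm (minimalPeriod_dvd_of_not_orbitSeparates hh hns')
    (minimalPeriod_dvd_of_not_orbitSeparates hh hns)

theorem exists_forall_orbitSeparates [CompactSpace X] [T2Space X] [SecondCountableTopology X]
    (hT : ∀ p : ℕ, ∃ D, CovDimLE (ptsOfPeriod T p) D ∧ (0 < p → 2 * D < p)) :
    ∃ h : C(X, ℝ), ∀ x y, x ≠ y → OrbitSeparates T h x y := by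
  obtain ⟨h, hh⟩ :=
    (dense_of_mem_residual (eventually_residual_forall_orbitSeparates hT)).nonempty
  exact ⟨h, fun x y => orbitSeparates_of_ne hh⟩

end Generic

section Embedding

variable {X : Type*} [TopologicalSpace X] {T : X ≃ₜ X}

theorem exists_isEmbedding_shift [CompactSpace X] {h : C(X, ℝ)}
    (hh : ∀ x y, x ≠ y → OrbitSeparates T h x y) :
    ∃ φ : X → (ℤ → I), IsEmbedding φ ∧ ∀ (x : X) (i : ℤ), φ (T x) i = φ x (i + 1) := by
  refine ⟨fun x i => unitInterval.sigmoid (h ((T ^ i) x)),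
    (Continuous.isClosedEmbedding (continuous_pi fun i => ?_) fun x y hxy => ?_).isEmbedding,
    fun x i => by simp only [zpow_add_apply_homeomorph, zpow_one]⟩
  · exact unitInterval.continuous_sigmoid.comp (h.continuous.comp (T ^ i).continuous)
  · by_contra hne
    obtain ⟨i, hi⟩ := hh x y hne
    exact hi (unitInterval.sigmoid_injective (congrFun hxy i))

theorem exists_covDim_eq_of_ne_top {X : Type*} [TopologicalSpace X] (hX : covDim X ≠ ⊤) :
    ∃ m : ℕ, covDim X = m ∧ CovDimLE X m := by
  have hne : {e : ℕ∞ | ∃ m : ℕ, e = m ∧ CovDimLE X m}.Nonempty :=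
    nonempty_iff_ne_empty.2 fun hempty => hX (by rw [covDim, hempty, sInf_empty])
  exact csInf_mem hne

theorem ptsOfPeriod_subset_periodicLE {X : Type*} (f : X → X) {p : ℕ} (hp : 1 ≤ p) :
    ptsOfPeriod f p ⊆ periodicLE f p :=
  fun _ hx => ⟨p, hp, le_rfl, hx⟩

theorem exists_covDimLE_ptsOfPeriod [T2Space X] {d : ℕ} (hdim : covDim X = d)
    (hper : ∀ n : ℕ, 1 ≤ n → n ≤ 2 * d → 2 * covDim (periodicLE T n) < n) (p : ℕ) :
    ∃ D, CovDimLE (ptsOfPeriod T p) D ∧ (0 < p → 2 * D < p) := by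
  have hclosed := isClosed_ptsOfPeriod T.continuous p
  by_cases hp : 1 ≤ p ∧ p ≤ 2 * d
  · have hlt := hper p hp.1 hp.2
    obtain ⟨D, hD, hPD⟩ := exists_covDim_eq_of_ne_top (X := periodicLE T p) fun htop => by
      rw [htop, ENat.mul_top two_ne_zero] at hlt
      exact not_top_lt hlt
    rw [hD] at hlt
    exact ⟨D, hPD.of_isClosedEmbedding (IsClosedEmbedding.inclusion
      (ptsOfPeriod_subset_periodicLE T hp.1) (hclosed.preimage continuous_subtype_val)),
      fun _ => by exact_mod_cast hlt⟩
  · obtain ⟨D, hD, hXD⟩ := exists_covDim_eq_of_ne_top (hdim ▸ ENat.natCast_ne_top d)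
    obtain rfl : d = D := by exact_mod_cast hdim.symm.trans hD
    exact ⟨d, hXD.of_isClosedEmbedding hclosed.isClosedEmbedding_subtypeVal, by omega⟩

end Embedding

theorem stmt9 {X : Type*} [MetricSpace X] [CompactSpace X]
    (T : X ≃ₜ X) (d : ℕ) (hdim : covDim X = d)
    (hper : ∀ n : ℕ, 1 ≤ n → n ≤ 2 * d →
      2 * covDim (periodicLE (⇑T) n) < (n : ℕ∞)) :
    ∃ φ : X → (ℤ → I), IsEmbedding φ ∧
      ∀ (x : X) (i : ℤ), φ (T x) i = φ x (i + 1) := by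
  obtain ⟨h, hh⟩ := exists_forall_orbitSeparates (exists_covDimLE_ptsOfPeriod hdim hper)
  exact exists_isEmbedding_shift hh
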